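/- Let n ≥ 2 be an integer and let a_1, …, a_n be real numbers satisfying ∑_{i=1}^n a_i = 0 and ∑_{i=1}^n a_i² = 𝒜. Then equality |∑_{i=1}^n a_i³| = ((n−2)/√(n(n−1))) · 𝒜^{3/2} holds if and only if at least n−1 of the numbers a_1, …, a_n are equal to each other. -/

import Mathlib

/-!
A mean-zero family `a` of size `n` takes the value `c` at all but one index exactly when
`∑ a i ^ 2 = n (n - 1) c ^ 2` and `∑ a i ^ 3 = - n (n - 1) (n - 2) c ^ 3`. To recover the family
from these two sums, note that they make `∑ c ((n - 1) c + a i) (a i - c) ^ 2` vanish, while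
Cauchy–Schwarz gives `|a i| ≤ (n - 1) |c|`, so that every summand is nonnegative. Hence each `a i`
is `c` or `-(n - 1) c`, and one entry of the second kind already exhausts
`∑ (a i - c) ^ 2 = (n c) ^ 2`. Eliminating `c` between the two sums gives the stated equality.
-/

open Fintype (card)

section FiniteFamilies

variable {ι : Type*} [Fintype ι]

theorem card_sub_one_le_card_filter_iff [Nonempty ι] (p : ι → Prop) [DecidablePred p] :
    card ι - 1 ≤ (Finset.univ.filter p).card ↔ ∃ i, ∀ j ≠ i, p j := by
  have hcard := Finset.card_filter_add_card_filter_not (s := Finset.univ) p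
  rw [Finset.card_univ] at hcard
  have hle : card ι - 1 ≤ (Finset.univ.filter p).card ↔
      (Finset.univ.filter fun i => ¬ p i).card ≤ 1 := by
    have := Fintype.card_pos (α := ι)
    omega
  simp only [hle, Finset.card_le_one_iff_subset_singleton, Finset.subset_singleton_iff',
    Finset.mem_filter_univ, ne_eq, not_imp_comm]

theorem sum_eq_add_card_sub_one_mul {R : Type*} [Ring R] {f : ι → R} {i : ι} {c : R}
    (h : ∀ j ≠ i, f j = c) : ∑ j, f j = f i + ((card ι : R) - 1) * c := by
  have hdev : ∑ j, (f j - c) = f i - c :=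
    Fintype.sum_eq_single i fun j hj => sub_eq_zero.2 (h j hj)
  rw [Finset.sum_sub_distrib, Finset.sum_const, Finset.card_univ, nsmul_eq_mul,
    sub_eq_iff_eq_add] at hdev
  rw [hdev, sub_one_mul]
  abel

end FiniteFamilies

section MeanZero

variable {ι R : Type*} [Fintype ι] [CommRing R] {a : ι → R} {c : R}

theorem sum_sq_and_sum_cube_of_eq_off {i : ι} (hsum : ∑ j, a j = 0) (h : ∀ j ≠ i, a j = c) :
    ∑ j, a j ^ 2 = card ι * (card ι - 1) * c ^ 2 ∧
      ∑ j, a j ^ 3 = -(card ι * (card ι - 1) * (card ι - 2) * c ^ 3) := by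
  have hi : a i = -((card ι - 1) * c) :=
    eq_neg_of_add_eq_zero_left ((sum_eq_add_card_sub_one_mul h).symm.trans hsum)
  have hpow (k : ℕ) : ∑ j, a j ^ k = a i ^ k + (card ι - 1) * c ^ k :=
    sum_eq_add_card_sub_one_mul fun j hj => congrArg (· ^ k) (h j hj)
  constructor <;> rw [hpow, hi] <;> ring

theorem sum_sub_sq_of_sum_eq_zero (hsum : ∑ i, a i = 0)
    (hsq : ∑ i, a i ^ 2 = card ι * (card ι - 1) * c ^ 2) :
    ∑ i, (a i - c) ^ 2 = (card ι * c) ^ 2 := by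
  simp only [sub_sq, Finset.sum_add_distrib, Finset.sum_sub_distrib, mul_assoc, ← Finset.mul_sum,
    ← Finset.sum_mul, hsum, hsq, Finset.sum_const, Finset.card_univ, nsmul_eq_mul]
  ring

theorem sum_mul_add_mul_sub_sq_eq_zero (hsum : ∑ i, a i = 0)
    (hsq : ∑ i, a i ^ 2 = card ι * (card ι - 1) * c ^ 2)
    (hcube : ∑ i, a i ^ 3 = -(card ι * (card ι - 1) * (card ι - 2) * c ^ 3)) :
    ∑ i, c * ((card ι - 1) * c + a i) * (a i - c) ^ 2 = 0 := by
  have hexpand (i : ι) : c * ((card ι - 1) * c + a i) * (a i - c) ^ 2 =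
      c * a i ^ 3 + (card ι - 3) * c ^ 2 * a i ^ 2 - (2 * card ι - 3) * c ^ 3 * a i +
        (card ι - 1) * c ^ 4 := by
    ring
  simp only [hexpand, Finset.sum_add_distrib, Finset.sum_sub_distrib, ← Finset.mul_sum, hsum, hsq,
    hcube, Finset.sum_const, Finset.card_univ, nsmul_eq_mul]
  ring

variable [LinearOrder R] [IsStrictOrderedRing R]

theorem card_mul_sq_le_of_sum_eq_zero (hsum : ∑ j, a j = 0) (i : ι) :
    card ι * a i ^ 2 ≤ (card ι - 1) * ∑ j, a j ^ 2 := by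
  classical
  have hcs := sq_sum_le_card_mul_sum_sq (s := Finset.univ.erase i) (f := a)
  rw [Finset.sum_erase_eq_sub (Finset.mem_univ i), Finset.sum_erase_eq_sub (Finset.mem_univ i),
    Finset.cast_card_erase_of_mem (Finset.mem_univ i), Finset.card_univ, hsum] at hcs
  linear_combination hcs

theorem abs_le_abs_card_sub_one_mul (hsum : ∑ j, a j = 0)
    (hsq : ∑ j, a j ^ 2 = card ι * (card ι - 1) * c ^ 2) (i : ι) :
    |a i| ≤ |(card ι - 1) * c| := by
  have : Nonempty ι := ⟨i⟩
  have hcard : (0 : R) < card ι := Nat.cast_pos.2 Fintype.card_pos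
  refine sq_le_sq.1 (le_of_mul_le_mul_left ?_ hcard)
  calc card ι * a i ^ 2 ≤ (card ι - 1) * ∑ j, a j ^ 2 := card_mul_sq_le_of_sum_eq_zero hsum i
    _ = card ι * ((card ι - 1) * c) ^ 2 := by rw [hsq]; ring

theorem eq_or_eq_neg_of_sum_sq_of_sum_cube (hsum : ∑ i, a i = 0)
    (hsq : ∑ i, a i ^ 2 = card ι * (card ι - 1) * c ^ 2)
    (hcube : ∑ i, a i ^ 3 = -(card ι * (card ι - 1) * (card ι - 2) * c ^ 3)) (i : ι) :
    a i = c ∨ a i = -((card ι - 1) * c) := by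
  have hbound := abs_le_abs_card_sub_one_mul hsum hsq
  have hone : (1 : R) ≤ card ι := Nat.one_le_cast.2 (Fintype.card_pos_iff.2 ⟨i⟩)
  have hnonneg (j : ι) : 0 ≤ c * ((card ι - 1) * c + a j) * (a j - c) ^ 2 := by
    refine mul_nonneg ?_ (sq_nonneg _)
    have : -(c * a j) ≤ c * ((card ι - 1) * c) := calc
      -(c * a j) ≤ |c| * |a j| := (neg_le_abs _).trans_eq (abs_mul _ _)
      _ ≤ |c| * |(card ι - 1) * c| := mul_le_mul_of_nonneg_left (hbound j) (abs_nonneg c)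
      _ = c * ((card ι - 1) * c) := by
        rw [abs_mul, abs_of_nonneg (sub_nonneg.2 hone), mul_left_comm, abs_mul_abs_self,
          mul_left_comm]
    linarith
  have hzero := (Finset.sum_eq_zero_iff_of_nonneg fun j _ => hnonneg j).1
    (sum_mul_add_mul_sub_sq_eq_zero hsum hsq hcube) i (Finset.mem_univ i)
  rcases mul_eq_zero.1 hzero with hprod | hdiff
  · rcases mul_eq_zero.1 hprod with hc | hlin
    · left
      simpa [hc] using hbound i
    · exact .inr (eq_neg_of_add_eq_zero_right hlin)
  · exact .inl (sub_eq_zero.1 (sq_eq_zero_iff.1 hdiff))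

theorem eq_of_ne_of_eq_neg_card_sub_one_mul {i : ι} (hsum : ∑ j, a j = 0)
    (hsq : ∑ j, a j ^ 2 = card ι * (card ι - 1) * c ^ 2) (hi : a i = -((card ι - 1) * c))
    {j : ι} (hj : j ≠ i) : a j = c := by
  classical
  have hrest : ∑ k ∈ Finset.univ.erase i, (a k - c) ^ 2 = 0 := by
    rw [Finset.sum_erase_eq_sub (Finset.mem_univ i), sum_sub_sq_of_sum_eq_zero hsum hsq, hi]
    ring
  have hzero := (Finset.sum_eq_zero_iff_of_nonneg fun k _ => sq_nonneg (a k - c)).1 hrest j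
    (Finset.mem_erase.2 ⟨hj, Finset.mem_univ j⟩)
  exact sub_eq_zero.1 (sq_eq_zero_iff.1 hzero)

theorem exists_forall_ne_eq_iff_sum_sq_and_sum_cube [Nonempty ι] (hsum : ∑ i, a i = 0) :
    (∃ i, ∀ j ≠ i, a j = c) ↔
      ∑ i, a i ^ 2 = card ι * (card ι - 1) * c ^ 2 ∧
        ∑ i, a i ^ 3 = -(card ι * (card ι - 1) * (card ι - 2) * c ^ 3) := by
  refine ⟨fun ⟨i, hi⟩ => sum_sq_and_sum_cube_of_eq_off hsum hi, fun ⟨hsq, hcube⟩ => ?_⟩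
  have hvalues := eq_or_eq_neg_of_sum_sq_of_sum_cube hsum hsq hcube
  by_cases hexc : ∃ i, a i = -((card ι - 1) * c)
  · obtain ⟨i, hi⟩ := hexc
    exact ⟨i, fun j => eq_of_ne_of_eq_neg_card_sub_one_mul hsum hsq hi⟩
  · exact ⟨Classical.arbitrary ι, fun j _ => (hvalues j).resolve_right fun hj => hexc ⟨j, hj⟩⟩

end MeanZero

section RealPowers

variable {N : ℝ}

theorem div_sqrt_mul_rpow_three_halves (hN : 0 < N) (k c : ℝ) :
    k / √N * (N * c ^ 2) ^ ((3 : ℝ) / 2) = N * k * |c| ^ 3 := by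
  have hroot : √(N * c ^ 2) = √N * |c| := by rw [Real.sqrt_mul hN.le, Real.sqrt_sq_eq_abs]
  have hpow : (N * c ^ 2) ^ ((3 : ℝ) / 2) = (√N * |c|) ^ 3 := by
    rw [Real.rpow_div_two_eq_sqrt 3 (by positivity), hroot]
    exact Real.rpow_natCast _ 3
  rw [hpow]
  nth_rw 3 [← Real.sq_sqrt hN.le]
  field_simp

theorem abs_eq_div_sqrt_mul_rpow_iff {k A p : ℝ} (hN : 0 < N) (hk : 0 ≤ k) (hA : 0 ≤ A) :
    |p| = k / √N * A ^ ((3 : ℝ) / 2) ↔ ∃ c, A = N * c ^ 2 ∧ p = N * k * c ^ 3 := by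
  constructor
  · intro hp
    obtain ⟨c, hc, rfl⟩ : ∃ c, 0 ≤ c ∧ A = N * c ^ 2 :=
      ⟨√(A / N), Real.sqrt_nonneg _, by
        rw [Real.sq_sqrt (div_nonneg hA hN.le), mul_div_cancel₀ _ hN.ne']⟩
    rw [div_sqrt_mul_rpow_three_halves hN, abs_of_nonneg hc] at hp
    rcases eq_or_eq_neg_of_abs_eq hp with hp | hp
    · exact ⟨c, rfl, hp⟩
    · exact ⟨-c, by rw [neg_sq], by rw [hp]; ring⟩
  · rintro ⟨c, rfl, rfl⟩
    rw [div_sqrt_mul_rpow_three_halves hN, abs_mul, abs_of_nonneg (mul_nonneg hN.le hk), abs_pow]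

end RealPowers

theorem sum_cubes_eq_iff (n : ℕ) (hn : 2 ≤ n) (a : Fin n → ℝ) (A : ℝ)
    (hsum : ∑ i, a i = 0) (hsq : ∑ i, (a i) ^ 2 = A) :
    |∑ i, (a i) ^ 3| = ((n : ℝ) - 2) / Real.sqrt (n * (n - 1)) * A ^ ((3 : ℝ) / 2) ↔
      ∃ c : ℝ, n - 1 ≤ (Finset.univ.filter (fun i => a i = c)).card := by
  have : Nonempty (Fin n) := Fin.pos_iff_nonempty.1 (by omega)
  have hn' : (2 : ℝ) ≤ n := Nat.ofNat_le_cast.2 hn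
  have hN : (0 : ℝ) < n * (n - 1) := mul_pos (by linarith) (by linarith)
  have hA : 0 ≤ A := hsq ▸ Finset.sum_nonneg fun i _ => sq_nonneg (a i)
  rw [← abs_neg, abs_eq_div_sqrt_mul_rpow_iff hN (sub_nonneg.2 hn') hA]
  refine exists_congr fun c => ?_
  have hcount := card_sub_one_le_card_filter_iff fun i => a i = c
  have hmoments := exists_forall_ne_eq_iff_sum_sq_and_sum_cube (c := c) hsum
  rw [Fintype.card_fin] at hcount hmoments
  rw [hcount, hmoments, hsq, neg_eq_iff_eq_neg]
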